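/- arXiv:2104.04035 — 6 statements merged into one kernel-verified Lean document; each statement's English description precedes it below -/
import Mathlib

section
/- Let $M, C, K \in \mathbb{R}^{n\times n}$ be symmetric matrices and $g \in \mathbb{R}^n$. Suppose $\lambda : \mathbb{R} \to \mathbb{C}$ and $x : \mathbb{R} \to \mathbb{C}^n$ are differentiable at $0$ and satisfy $\big(\lambda(t)^2 M + \lambda(t)(C + t\, g g^\top) + K\big)x(t) = 0$ for all $t$ in a neighborhood of $0$. If $x(0)^\top \big(2\lambda(0) M + C\big) x(0) \neq 0$, then $\lambda'(0) = -\dfrac{\lambda(0)\,\big(g^\top x(0)\big)^2}{x(0)^\top \big(2\lambda(0) M + C\big)x(0)}$. -/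
open Matrix

theorem hasDerivAt_dot_aux {n : ℕ} (u : Fin n → ℂ) {x : ℝ → Fin n → ℂ} {x' : Fin n → ℂ}
    (hx : HasDerivAt x x' 0) : HasDerivAt (fun t => u ⬝ᵥ x t) (u ⬝ᵥ x') 0 := by
  simp only [dotProduct]
  refine HasDerivAt.fun_sum fun i _ => ?_
  exact ((hasDerivAt_pi.1 hx) i).const_mul (u i)

theorem dot_symm_aux {n : ℕ} {A : Matrix (Fin n) (Fin n) ℝ} (hA : A.IsSymm) (u v : Fin n → ℂ) :
    u ⬝ᵥ (A.map Complex.ofReal).mulVec v = (A.map Complex.ofReal).mulVec u ⬝ᵥ v := by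
  have h : (A.map Complex.ofReal)ᵀ = A.map Complex.ofReal := by
    rw [← transpose_map, hA.eq]
  rw [dotProduct_mulVec, ← mulVec_transpose, h]

/-- First-order perturbation formula for a quadratic eigenvalue with respect to
a viscosity parameter, with rank-one derivative `g gᵀ` of the damping matrix. -/
theorem qep_eigenvalue_derivative (n : ℕ) (M C K : Matrix (Fin n) (Fin n) ℝ)
    (hM : M.IsSymm) (hC : C.IsSymm) (hK : K.IsSymm) (g : Fin n → ℝ)
    (lam : ℝ → ℂ) (x : ℝ → Fin n → ℂ)
    (hlam : DifferentiableAt ℝ lam 0) (hx : DifferentiableAt ℝ x 0)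
    (heq : ∀ᶠ t in nhds (0 : ℝ),
      ((lam t) ^ 2 • M.map Complex.ofReal
        + (lam t) • (C.map Complex.ofReal
            + (t : ℂ) • vecMulVec (fun i => (g i : ℂ)) (fun i => (g i : ℂ)))
        + K.map Complex.ofReal).mulVec (x t) = 0)
    (hden : x 0 ⬝ᵥ ((2 * lam 0) • M.map Complex.ofReal
        + C.map Complex.ofReal).mulVec (x 0) ≠ 0) :
    deriv lam 0 = -(lam 0 * ((fun i => (g i : ℂ)) ⬝ᵥ x 0) ^ 2) /
      (x 0 ⬝ᵥ ((2 * lam 0) • M.map Complex.ofReal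
        + C.map Complex.ofReal).mulVec (x 0)) := by
  obtain ⟨G, hG⟩ : ∃ G : Fin n → ℂ, G = fun i => (g i : ℂ) := ⟨_, rfl⟩
  simp only [← hG] at heq ⊢
  have hl := hlam.hasDerivAt
  have hx' := hx.hasDerivAt
  have h0 := heq.self_of_nhds
  have hexp : ∀ (l t : ℂ) (u v : Fin n → ℂ),
      u ⬝ᵥ (l ^ 2 • M.map Complex.ofReal
        + l • (C.map Complex.ofReal + t • vecMulVec G G)
        + K.map Complex.ofReal).mulVec v =
      l ^ 2 * ((M.map Complex.ofReal).mulVec u ⬝ᵥ v)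
        + l * ((C.map Complex.ofReal).mulVec u ⬝ᵥ v + t * ((G ⬝ᵥ u) * (G ⬝ᵥ v)))
        + (K.map Complex.ofReal).mulVec u ⬝ᵥ v := by
    intro l t u v
    rw [← dot_symm_aux hM, ← dot_symm_aux hC, ← dot_symm_aux hK]
    simp only [add_mulVec, smul_mulVec, vecMulVec_mulVec, dotProduct_add, dotProduct_smul,
      smul_eq_mul, op_smul_eq_smul, dotProduct_comm u G]
    ring
  have hz : (fun t : ℝ => (lam t) ^ 2 * ((M.map Complex.ofReal).mulVec (x 0) ⬝ᵥ x t)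
        + lam t * ((C.map Complex.ofReal).mulVec (x 0) ⬝ᵥ x t
          + (t : ℂ) * ((G ⬝ᵥ x 0) * (G ⬝ᵥ x t)))
        + (K.map Complex.ofReal).mulVec (x 0) ⬝ᵥ x t) =ᶠ[nhds 0] fun _ => 0 := by
    filter_upwards [heq] with t ht
    rw [← hexp, ht, dotProduct_zero]
  have ht : HasDerivAt (fun t : ℝ => (t : ℂ)) 1 0 := Complex.ofRealCLM.hasDerivAt
  have hd := (((hl.pow 2).mul (hasDerivAt_dot_aux ((M.map Complex.ofReal).mulVec (x 0)) hx')).add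
    (hl.mul ((hasDerivAt_dot_aux ((C.map Complex.ofReal).mulVec (x 0)) hx').add
      (ht.mul ((hasDerivAt_dot_aux G hx').const_mul (G ⬝ᵥ x 0)))))).add
    (hasDerivAt_dot_aux ((K.map Complex.ofReal).mulVec (x 0)) hx')
  have hu := hd.unique ((hasDerivAt_const (0 : ℝ) (0 : ℂ)).congr_of_eventuallyEq hz)
  have h1 : deriv x 0 ⬝ᵥ (0 : Fin n → ℂ) = 0 := dotProduct_zero _
  rw [← h0, hexp] at h1
  rw [← dot_symm_aux hM, ← dot_symm_aux hC, ← dot_symm_aux hK,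
    dotProduct_comm (deriv x 0), dotProduct_comm (deriv x 0), dotProduct_comm (deriv x 0)] at h1
  have hD : x 0 ⬝ᵥ ((2 * lam 0) • M.map Complex.ofReal + C.map Complex.ofReal).mulVec (x 0)
      = 2 * lam 0 * ((M.map Complex.ofReal).mulVec (x 0) ⬝ᵥ x 0)
        + (C.map Complex.ofReal).mulVec (x 0) ⬝ᵥ x 0 := by
    rw [← dot_symm_aux hM, ← dot_symm_aux hC]
    simp only [add_mulVec, smul_mulVec, dotProduct_add, dotProduct_smul, smul_eq_mul]
  rw [eq_div_iff hden, hD]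
  simp only [Pi.add_apply, Pi.mul_apply, Pi.pow_apply, Complex.ofReal_zero] at hu h1
  norm_num at hu
  linear_combination hu - h1
end

section
/- Let $D \in \mathbb{C}^{m\times m}$ be diagonal, $\rho \in \mathbb{C}$, and $u, z \in \mathbb{C}^m$ with $u_i \neq 0$ and $z_i \neq 0$ for all $i$. Let $s \in \mathbb{C}^m$ satisfy $s_i \neq 0$ and $s_i^2 = z_i/u_i$ for all $i$, set $S = \operatorname{diag}(s_1, \dots, s_m)$ and $\hat z = S u$. Then $u^\top S^2 = z^\top$ and $S\,(D + \rho\, u z^\top)\,S^{-1} = D + \rho\, \hat z \hat z^\top$; consequently, for any $\lambda \in \mathbb{C}$ and $x \in \mathbb{C}^m$, $(D + \rho\, u z^\top)x = \lambda x$ holds if and only if $(D + \rho\, \hat z \hat z^\top)(Sx) = \lambda (Sx)$. -/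
open Matrix

/-- A DPR1 matrix with nowhere-zero vectors `u`, `z` is diagonally similar to a
DPR1 complex symmetric matrix with the same eigenvalues. -/
theorem dpr1_to_dpr1csym (m : ℕ) (d u z : Fin m → ℂ) (ρ : ℂ)
    (hu : ∀ i, u i ≠ 0) (hz : ∀ i, z i ≠ 0)
    (s : Fin m → ℂ) (hs : ∀ i, s i ≠ 0) (hs2 : ∀ i, s i ^ 2 = z i / u i) :
    vecMul u (Matrix.diagonal s * Matrix.diagonal s) = z ∧
    Matrix.diagonal s * (Matrix.diagonal d + ρ • vecMulVec u z) * (Matrix.diagonal s)⁻¹ =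
      Matrix.diagonal d +
        ρ • vecMulVec ((Matrix.diagonal s).mulVec u) ((Matrix.diagonal s).mulVec u) ∧
    ∀ (lam : ℂ) (x : Fin m → ℂ),
      (Matrix.diagonal d + ρ • vecMulVec u z).mulVec x = lam • x ↔
        (Matrix.diagonal d +
            ρ • vecMulVec ((Matrix.diagonal s).mulVec u)
              ((Matrix.diagonal s).mulVec u)).mulVec ((Matrix.diagonal s).mulVec x) =
          lam • (Matrix.diagonal s).mulVec x := by
  have hz' : ∀ i, z i = u i * s i ^ 2 := fun i => by
    rw [hs2 i, mul_div_cancel₀ _ (hu i)]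
  have key : Matrix.diagonal s * (Matrix.diagonal d + ρ • vecMulVec u z) =
      (Matrix.diagonal d +
        ρ • vecMulVec ((Matrix.diagonal s).mulVec u) ((Matrix.diagonal s).mulVec u)) *
        Matrix.diagonal s := by
    ext i j
    rw [Matrix.diagonal_mul, Matrix.mul_diagonal]
    simp only [Matrix.add_apply, Matrix.smul_apply, vecMulVec_apply, mulVec_diagonal,
      smul_eq_mul, hz' j]
    by_cases h : i = j
    · subst h
      simp only [Matrix.diagonal_apply_eq]
      ring
    · simp only [Matrix.diagonal_apply_ne _ h]
      ring
  have hdet : IsUnit (Matrix.diagonal s).det := by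
    rw [Matrix.det_diagonal, isUnit_iff_ne_zero]
    exact Finset.prod_ne_zero_iff.mpr fun i _ => hs i
  refine ⟨?_, ?_, ?_⟩
  · ext i
    rw [Matrix.diagonal_mul_diagonal, Matrix.vecMul_diagonal, hz' i]
    ring
  · rw [key, Matrix.mul_nonsing_inv_cancel_right _ _ hdet]
  · intro lam x
    rw [Matrix.mulVec_mulVec, ← key, ← Matrix.mulVec_mulVec, ← Matrix.mulVec_smul]
    refine ⟨fun h => by rw [h], fun h => ?_⟩
    ext i
    have := congrFun h i
    rw [mulVec_diagonal, mulVec_diagonal] at this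
    exact mul_left_cancel₀ (hs i) this
end

section
/- Let $D = \operatorname{diag}(d_1, \dots, d_m) \in \mathbb{C}^{m\times m}$, $z \in \mathbb{C}^m$, and $\rho \in \mathbb{C}$ with $\rho \neq 0$. For any index $i$, the diagonal entry $d_i$ is an eigenvalue of $A = D + \rho\, z z^\top$ (i.e., there exists $x \neq 0$ with $Ax = d_i x$) if and only if $z_i = 0$ or there exists $j \neq i$ with $d_j = d_i$. -/
open Matrix

/-- Characterization of when a diagonal entry is an eigenvalue of a
diagonal-plus-rank-one complex symmetric matrix. -/
theorem dpr1csym_diagonal_eigenvalue (m : ℕ) (d z : Fin m → ℂ) (ρ : ℂ) (hρ : ρ ≠ 0)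
    (i : Fin m) :
    (∃ x : Fin m → ℂ, x ≠ 0 ∧
        (Matrix.diagonal d + ρ • vecMulVec z z).mulVec x = d i • x) ↔
      z i = 0 ∨ ∃ j, j ≠ i ∧ d j = d i := by
  have key : ∀ (x : Fin m → ℂ) (k : Fin m),
      (Matrix.diagonal d + ρ • vecMulVec z z).mulVec x k
        = d k * x k + ρ * (z k * (z ⬝ᵥ x)) := by
    intro x k
    rw [Matrix.add_mulVec, Pi.add_apply, Matrix.mulVec_diagonal, Matrix.smul_mulVec,
      Pi.smul_apply, smul_eq_mul]
    congr 2
    simp only [Matrix.mulVec, dotProduct, vecMulVec_apply, Finset.mul_sum, mul_assoc]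
  constructor
  · rintro ⟨x, hx, h⟩
    by_contra! hc
    obtain ⟨hz, hd⟩ := hc
    apply hx
    have hk : ∀ k, d k * x k + ρ * (z k * (z ⬝ᵥ x)) = d i * x k := by
      intro k
      rw [← key, h, Pi.smul_apply, smul_eq_mul]
    have hs : z ⬝ᵥ x = 0 := by
      have h1 := hk i
      have h2 : ρ * (z i * (z ⬝ᵥ x)) = 0 := by linear_combination h1
      simpa [hρ, hz] using h2
    have hj : ∀ j, j ≠ i → x j = 0 := by
      intro j hji
      have h1 := hk j
      rw [hs] at h1
      have h2 : (d j - d i) * x j = 0 := by linear_combination h1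
      exact (mul_eq_zero.mp h2).resolve_left (sub_ne_zero.mpr (hd j hji))
    have hs2 : z i * x i = 0 := by
      rw [← hs, dotProduct, Finset.sum_eq_single i]
      · intro b _ hb
        rw [hj b hb, mul_zero]
      · simp
    funext j
    by_cases hji : j = i
    · subst hji
      exact (mul_eq_zero.mp hs2).resolve_left hz
    · exact hj j hji
  · intro h
    by_cases hz : z i = 0
    · refine ⟨Pi.single i 1, by simp, ?_⟩
      funext k
      rw [key, dotProduct_single, hz, Pi.smul_apply, smul_eq_mul]
      by_cases hk : k = i
      · subst hk; simp
      · simp [hk]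
    · obtain ⟨j, hji, hd⟩ := h.resolve_left hz
      refine ⟨Pi.single i (z j) - Pi.single j (z i), ?_, ?_⟩
      · intro h0
        have := congrFun h0 j
        simp [hji, hz] at this
      · funext k
        rw [key, dotProduct_sub, dotProduct_single, dotProduct_single, Pi.smul_apply,
          smul_eq_mul, mul_comm (z i), sub_self, mul_zero, mul_zero, add_zero]
        by_cases hk : k = i
        · subst hk; rfl
        · by_cases hk2 : k = j
          · subst hk2; rw [hd]
          · simp [hk, hk2]
end

section
/- Let $D = \operatorname{diag}(d_1, \dots, d_m) \in \mathbb{C}^{m\times m}$, $z \in \mathbb{C}^m$, and $\rho \in \mathbb{C}$ with $\rho \neq 0$. If $\lambda \in \mathbb{C}$ satisfies $\lambda \neq d_i$ for all $i$, then $\lambda$ is an eigenvalue of $A = D + \rho\, z z^\top$ (i.e., there exists $x \neq 0$ with $Ax = \lambda x$) if and only if the secular function vanishes at $\lambda$: $f(\lambda) = 1 + \rho \sum_{i=1}^{m} \frac{z_i^2}{d_i - \lambda} = 0$. -/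
open Matrix

/-- Away from the diagonal entries of `D`, the eigenvalues of a
diagonal-plus-rank-one complex symmetric matrix are exactly the zeros of the
secular function. -/
theorem dpr1csym_secular_eigenvalue (m : ℕ) (d z : Fin m → ℂ) (ρ : ℂ) (hρ : ρ ≠ 0)
    (lam : ℂ) (hlam : ∀ i, lam ≠ d i) :
    (∃ x : Fin m → ℂ, x ≠ 0 ∧
        (Matrix.diagonal d + ρ • vecMulVec z z).mulVec x = lam • x) ↔
      1 + ρ * ∑ i, z i ^ 2 / (d i - lam) = 0 := by
  have hd : ∀ i, d i - lam ≠ 0 := fun i => sub_ne_zero.mpr (hlam i).symm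
  have key : ∀ x : Fin m → ℂ,
      (Matrix.diagonal d + ρ • vecMulVec z z).mulVec x = lam • x ↔
        ∀ i, d i * x i + ρ * (z i * ∑ j, z j * x j) = lam * x i := by
    intro x
    rw [funext_iff]
    refine forall_congr' fun i => ?_
    have h : (vecMulVec z z).mulVec x i = z i * ∑ j, z j * x j := by
      simp only [mulVec, dotProduct, vecMulVec_apply, Finset.mul_sum, mul_assoc]
    rw [Matrix.add_mulVec, Matrix.smul_mulVec, Pi.add_apply, Pi.smul_apply, h,
      Matrix.mulVec_diagonal, Pi.smul_apply, smul_eq_mul, smul_eq_mul]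
  constructor
  · rintro ⟨x, hx, h⟩
    rw [key] at h
    set s := ∑ j, z j * x j with hs
    have hxi : ∀ i, x i = -(ρ * s) * (z i / (d i - lam)) := by
      intro i
      have h1 := hd i
      field_simp
      linear_combination h i
    have hs0 : s ≠ 0 := by
      intro h0
      apply hx
      funext i
      rw [hxi i, h0]
      simp
    have h2 : s = -(ρ * s) * ∑ i, z i ^ 2 / (d i - lam) := by
      conv_lhs => rw [hs]
      rw [Finset.mul_sum]
      refine Finset.sum_congr rfl fun i _ => ?_
      conv_lhs => rw [hxi i]
      ring
    apply mul_left_cancel₀ hs0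
    linear_combination h2
  · intro h
    have hsum : ∑ j, z j * (z j / (d j - lam)) = ∑ i, z i ^ 2 / (d i - lam) :=
      Finset.sum_congr rfl fun i _ => by ring
    refine ⟨fun i => z i / (d i - lam), ?_, ?_⟩
    · intro h0
      have : ∑ j, z j * (z j / (d j - lam)) = 0 :=
        Finset.sum_eq_zero fun i _ => by
          have := congrFun h0 i
          simp only [Pi.zero_apply] at this
          rw [this, mul_zero]
      rw [← hsum, this] at h
      simp at h
    · rw [key]
      intro i
      simp only [hsum]
      have h3 : (d i - lam) * (z i / (d i - lam)) = z i := mul_div_cancel₀ _ (hd i)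
      linear_combination h3 + z i * h
end

section
/- Let $D = \operatorname{diag}(d_1, \dots, d_m) \in \mathbb{C}^{m\times m}$ with $d_1, \dots, d_m$ pairwise distinct, $z \in \mathbb{C}^m$, $\rho \in \mathbb{C}$, and let $\lambda \in \mathbb{C}$ satisfy $\lambda \neq d_i$ for all $i$ and $1 + \rho \sum_{i=1}^{m} \frac{z_i^2}{d_i - \lambda} = 0$. Fix an index $s$, let $D_\mathrm{d} = \operatorname{diag}\big((d_i)_{i \neq s}\big) \in \mathbb{C}^{(m-1)\times(m-1)}$, and let $z_\mathrm{d} \in \mathbb{C}^{m-1}$ be any vector whose entries satisfy $(z_\mathrm{d})_i^2 = z_i^2\,\frac{d_i - d_s}{d_i - \lambda}$ for each $i \neq s$. Then for all $\mu \in \mathbb{C}$, $\det\big(D + \rho\, z z^\top - \mu I\big) = (\lambda - \mu)\,\det\big(D_\mathrm{d} + \rho\, z_\mathrm{d} z_\mathrm{d}^\top - \mu I\big)$; in particular, the spectrum of the deflated matrix $A_\mathrm{d} = D_\mathrm{d} + \rho\, z_\mathrm{d} z_\mathrm{d}^\top$ is the spectrum of $A = D + \rho\, z z^\top$ with one copy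 of $\lambda$ removed. -/
open Matrix

theorem det_aux {n : Type*} [Fintype n] [DecidableEq n] (d z : n → ℂ) (ρ μ : ℂ)
    (h : ∀ i, d i - μ ≠ 0) :
    (Matrix.diagonal d + ρ • vecMulVec z z - μ • (1 : Matrix n n ℂ)).det
      = (∏ i, (d i - μ)) * (1 + ρ * ∑ i, z i ^ 2 / (d i - μ)) := by
  have e : Matrix.diagonal d + ρ • vecMulVec z z - μ • (1 : Matrix n n ℂ)
      = Matrix.diagonal (fun i => d i - μ) *
        (1 + replicateCol Unit (fun i => ρ * z i / (d i - μ)) * replicateRow Unit z) := by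
    ext i j
    have hi := h i
    rw [Matrix.diagonal_mul]
    by_cases hij : i = j
    · subst hij
      simp [Matrix.mul_apply, vecMulVec_apply]
      field_simp
      ring
    · simp [Matrix.mul_apply, vecMulVec_apply, hij]
      field_simp
  rw [e, det_mul, det_diagonal, det_one_add_replicateCol_mul_replicateRow]
  congr 2
  rw [dotProduct, Finset.mul_sum]
  refine Finset.sum_congr rfl fun i _ => ?_
  ring

/-- Deflation of an eigenvalue `λ` (a zero of the secular function) from a
diagonal-plus-rank-one complex symmetric matrix: the characteristic determinant
factors as `(λ - μ)` times that of the deflated matrix. -/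
theorem dpr1csym_deflation (m : ℕ) (d z : Fin m → ℂ) (hd : Function.Injective d)
    (ρ : ℂ) (lam : ℂ) (hlam : ∀ i, lam ≠ d i)
    (hsec : 1 + ρ * ∑ i, z i ^ 2 / (d i - lam) = 0)
    (s : Fin m) (zd : {i : Fin m // i ≠ s} → ℂ)
    (hzd : ∀ i : {i : Fin m // i ≠ s},
      zd i ^ 2 = z i ^ 2 * ((d i - d s) / (d i - lam))) :
    ∀ μ : ℂ,
      (Matrix.diagonal d + ρ • vecMulVec z z
          - μ • (1 : Matrix (Fin m) (Fin m) ℂ)).det =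
        (lam - μ) *
          (Matrix.diagonal (fun i : {i : Fin m // i ≠ s} => d i) + ρ • vecMulVec zd zd
              - μ • (1 : Matrix {i : Fin m // i ≠ s} {i : Fin m // i ≠ s} ℂ)).det := by
  have key : ∀ μ ∈ (Set.range d)ᶜ, (Matrix.diagonal d + ρ • vecMulVec z z
          - μ • (1 : Matrix (Fin m) (Fin m) ℂ)).det =
        (lam - μ) *
          (Matrix.diagonal (fun i : {i : Fin m // i ≠ s} => d i) + ρ • vecMulVec zd zd
              - μ • (1 : Matrix {i : Fin m // i ≠ s} {i : Fin m // i ≠ s} ℂ)).det := by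
    intro μ hμ
    have h : ∀ i, d i - μ ≠ 0 := fun i hi => hμ ⟨i, sub_eq_zero.mp hi⟩
    have hl : ∀ i, d i - lam ≠ 0 := fun i hi => hlam i (sub_eq_zero.mp hi).symm
    rw [det_aux d z ρ μ h, det_aux _ zd ρ μ (fun i => h i)]
    have hp : ∏ i, (d i - μ) = (d s - μ) * ∏ i : {i : Fin m // i ≠ s}, (d i - μ) :=
      Fintype.prod_eq_mul_prod_subtype_ne (fun i => d i - μ) s
    have hs : (lam - μ) * ∑ i : {i : Fin m // i ≠ s}, zd i ^ 2 / (d i - μ)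
        = (lam - d s) * ∑ i, z i ^ 2 / (d i - lam) + (d s - μ) * ∑ i, z i ^ 2 / (d i - μ) := by
      have h1 := Fintype.sum_eq_add_sum_subtype_ne
        (fun i => z i ^ 2 * ((d i - d s) / (d i - lam)) / (d i - μ)) s
      simp only [sub_self, zero_div, mul_zero, zero_add] at h1
      simp only [hzd]
      rw [← h1, Finset.mul_sum, Finset.mul_sum, Finset.mul_sum, ← Finset.sum_add_distrib]
      refine Finset.sum_congr rfl fun i _ => ?_
      have := h i
      have := hl i
      field_simp
      ring
    rw [hp]
    linear_combination (∏ i : {i : Fin m // i ≠ s}, (d i - μ)) * (-ρ * hs - (lam - d s) * hsec)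
  have hdense : Dense (Set.range d)ᶜ := (Set.finite_range d).countable.dense_compl ℂ
  have := Continuous.ext_on hdense (f := fun μ : ℂ => (Matrix.diagonal d + ρ • vecMulVec z z
          - μ • (1 : Matrix (Fin m) (Fin m) ℂ)).det) (g := fun μ : ℂ => (lam - μ) *
          (Matrix.diagonal (fun i : {i : Fin m // i ≠ s} => d i) + ρ • vecMulVec zd zd
              - μ • (1 : Matrix {i : Fin m // i ≠ s} {i : Fin m // i ≠ s} ℂ)).det)
    (Continuous.matrix_det (by fun_prop))
    (Continuous.mul (by fun_prop) (Continuous.matrix_det (by fun_prop))) key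
  exact fun μ => congrFun this μ
end

section
/- Let $A \in \mathbb{C}^{m\times m}$ be complex symmetric ($A^\top = A$) and diagonalizable over $\mathbb{C}$. Then there exist a complex orthogonal matrix $W \in \mathbb{C}^{m\times m}$ (i.e., $W^\top W = I$) and a diagonal matrix $\Lambda \in \mathbb{C}^{m\times m}$ such that $A = W \Lambda W^\top$. -/
open Matrix

open Polynomial in
lemma sqrt_mod_aux (s : Multiset ℂ) : (∀ a ∈ s, a ≠ 0) →
    ∃ q : ℂ[X], (s.map (fun a => X - C a)).prod ∣ q ^ 2 - X := by
  induction s using Multiset.induction_on with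
  | empty => intro _; exact ⟨0, by simp⟩
  | cons a s ih =>
    intro hs
    obtain ⟨q, h, hq⟩ := ih (fun b hb => hs b (Multiset.mem_cons_of_mem hb))
    have ha : a ≠ 0 := hs a (Multiset.mem_cons_self a s)
    rw [Multiset.map_cons, Multiset.prod_cons]
    generalize (s.map (fun a => X - C a)).prod = f at hq ⊢
    have key : ∃ c : ℂ, h.eval a + 2 * c * q.eval a + c ^ 2 * f.eval a = 0 := by
      have he := congrArg (Polynomial.eval a) hq
      simp only [eval_sub, eval_pow, eval_X, eval_mul] at he
      by_cases hf : f.eval a = 0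
      · have hqa : q.eval a ≠ 0 := by
          intro h0
          rw [hf, h0] at he
          apply ha
          linear_combination -he
        refine ⟨-h.eval a / (2 * q.eval a), ?_⟩
        rw [hf]
        field_simp
        ring
      · obtain ⟨z, hz⟩ := IsAlgClosed.exists_eq_mul_self
          ((q.eval a) ^ 2 - f.eval a * h.eval a)
        refine ⟨(z - q.eval a) / f.eval a, ?_⟩
        field_simp
        linear_combination -hz
    obtain ⟨c, hc⟩ := key
    have hd : X - C a ∣ h + 2 * C c * q + C c ^ 2 * f := by
      rw [dvd_iff_isRoot, IsRoot.def]
      simpa using hc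
    obtain ⟨g, hg⟩ := hd
    exact ⟨q + C c * f, g, by linear_combination hq + f * hg⟩

lemma sqrt_matrix_aux {m : ℕ} (G : Matrix (Fin m) (Fin m) ℂ) (hG : IsUnit G) :
    ∃ q : Polynomial ℂ, (Polynomial.aeval G q) ^ 2 = G := by
  have hdet : G.det ≠ 0 := by
    have := (Matrix.isUnit_iff_isUnit_det G).1 hG
    exact this.ne_zero
  obtain ⟨q, h, hq⟩ := sqrt_mod_aux G.charpoly.roots (by
    rintro a ha rfl
    apply hdet
    rw [Matrix.det_eq_prod_roots_charpoly]
    exact Multiset.prod_eq_zero ha)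
  refine ⟨q, ?_⟩
  have h2 : (G.charpoly.roots.map (fun a => Polynomial.X - Polynomial.C a)).prod = G.charpoly :=
    ((IsAlgClosed.splits G.charpoly).eq_prod_roots_of_monic G.charpoly_monic).symm
  rw [h2] at hq
  have h3 := congrArg (Polynomial.aeval G) hq
  simp only [map_sub, map_pow, map_mul, Matrix.aeval_self_charpoly, zero_mul,
    Polynomial.aeval_X] at h3
  exact sub_eq_zero.1 h3

/-- A diagonalizable complex symmetric matrix admits an eigendecomposition
`A = W Λ Wᵀ` with `W` complex orthogonal (`Wᵀ W = I`) and `Λ` diagonal. -/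
theorem complex_symmetric_orthogonal_eigendecomposition (m : ℕ)
    (A : Matrix (Fin m) (Fin m) ℂ) (hA : A.IsSymm)
    (hdiag : ∃ (P D : Matrix (Fin m) (Fin m) ℂ), IsUnit P ∧ D.IsDiag ∧ A = P * D * P⁻¹) :
    ∃ (W L : Matrix (Fin m) (Fin m) ℂ), Wᵀ * W = 1 ∧ L.IsDiag ∧ A = W * L * Wᵀ := by
  obtain ⟨P, D, hP, hD, hAP⟩ := hdiag
  have hPd := (Matrix.isUnit_iff_isUnit_det P).1 hP
  have hDT : Dᵀ = D := hD.isSymm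
  have hPTd : IsUnit Pᵀ.det := by rwa [Matrix.det_transpose]
  have hGu : IsUnit (Pᵀ * P) := (Matrix.isUnit_iff_isUnit_det _).2 (by
    rw [Matrix.det_mul]; exact hPTd.mul hPd)
  have i1 : P⁻¹ * P = 1 := Matrix.nonsing_inv_mul _ hPd
  have i2 : P * P⁻¹ = 1 := Matrix.mul_nonsing_inv _ hPd
  have i3 : Pᵀ * P⁻¹ᵀ = 1 := by rw [← Matrix.transpose_mul, i1, Matrix.transpose_one]
  have hcomm : Commute (Pᵀ * P) D := by
    have e : P⁻¹ᵀ * D * Pᵀ = P * D * P⁻¹ := by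
      have := hA.eq
      rw [hAP, Matrix.transpose_mul, Matrix.transpose_mul, hDT, ← mul_assoc] at this
      exact this
    have := congrArg (fun M => Pᵀ * M * P) e
    change Pᵀ * P * D = D * (Pᵀ * P)
    calc Pᵀ * P * D = Pᵀ * (P * D * P⁻¹) * P := by simp only [mul_assoc, i1, mul_one]
      _ = Pᵀ * (P⁻¹ᵀ * D * Pᵀ) * P := by rw [e]
      _ = (Pᵀ * P⁻¹ᵀ) * D * (Pᵀ * P) := by simp only [mul_assoc]
      _ = _ := by rw [i3, one_mul]
  obtain ⟨q, hq⟩ := sqrt_matrix_aux (Pᵀ * P) hGu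
  have hGs : (Pᵀ * P)ᵀ = Pᵀ * P := by simp
  have hSs : (Polynomial.aeval (Pᵀ * P) q)ᵀ = Polynomial.aeval (Pᵀ * P) q := by
    simp only [Polynomial.aeval_eq_sum_range, Matrix.transpose_sum, Matrix.transpose_smul,
      Matrix.transpose_pow, hGs]
  have hSc : Commute (Polynomial.aeval (Pᵀ * P) q) D := by
    rw [Polynomial.aeval_eq_sum_range]
    exact Commute.sum_left _ _ _ (fun i _ => (hcomm.pow_left i).smul_left _)
  generalize Polynomial.aeval (Pᵀ * P) q = S at hq hSs hSc
  have hSd : IsUnit S.det := by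
    have := (Matrix.isUnit_iff_isUnit_det _).1 hGu
    rw [← hq, Matrix.det_pow] at this
    exact (isUnit_pow_iff two_ne_zero).1 this
  have s1 : S⁻¹ * S = 1 := Matrix.nonsing_inv_mul _ hSd
  have s2 : S * S⁻¹ = 1 := Matrix.mul_nonsing_inv _ hSd
  have hSis : S⁻¹ᵀ = S⁻¹ := by rw [Matrix.transpose_nonsing_inv, hSs]
  have c : S⁻¹ * D = D * S⁻¹ := by
    calc S⁻¹ * D = S⁻¹ * (D * S) * S⁻¹ := by simp only [mul_assoc, s2, mul_one]
      _ = S⁻¹ * (S * D) * S⁻¹ := by rw [hSc.eq]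
      _ = (S⁻¹ * S) * D * S⁻¹ := by simp only [mul_assoc]
      _ = _ := by rw [s1, one_mul]
  have o : (P * S⁻¹)ᵀ * (P * S⁻¹) = 1 := by
    calc (P * S⁻¹)ᵀ * (P * S⁻¹) = S⁻¹ * (Pᵀ * P) * S⁻¹ := by
          rw [Matrix.transpose_mul, hSis]; simp only [mul_assoc]
      _ = (S⁻¹ * S) * (S * S⁻¹) := by rw [← hq, pow_two]; simp only [mul_assoc]
      _ = 1 := by rw [s1, s2, one_mul]
  refine ⟨P * S⁻¹, D, o, hD, ?_⟩
  have o' := mul_eq_one_comm.1 o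
  calc A = P * D * P⁻¹ * ((P * S⁻¹) * (P * S⁻¹)ᵀ) := by rw [o', mul_one, hAP]
    _ = P * D * (P⁻¹ * P) * S⁻¹ * (P * S⁻¹)ᵀ := by simp only [mul_assoc]
    _ = P * (D * S⁻¹) * (P * S⁻¹)ᵀ := by rw [i1, mul_one, mul_assoc P D]
    _ = _ := by rw [← c]; simp only [mul_assoc]
end
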